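/- Let a, b be coprime positive integers with (a,b) ≠ (1,1) and c = a + b. The set 𝒯°(a,b) of derivations ψ ∈ 𝒯(a,b) for which a, b are ψ-dependent is a saturated subgroup of 𝒯(a,b) of rank ω(abc) − 2: there exist ω(abc) − 2 ℤ-linearly independent elements of 𝒯°(a,b), and any ω(abc) − 1 elements of 𝒯°(a,b) are ℤ-linearly dependent. In particular, 𝒯°(a,b) is properly contained in 𝒯(a,b). -/

import Mathlib

open Finset

/-- The arithmetic derivative attached to `ψ`: `d^ψ(n) = Σ_{p ∣ n} (n·v_p(n)/p)·ψ(p)`,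
with `d^ψ(0) = 0` (empty sum). Each term is written as `(n/p)·v_p(n)·ψ(p)`, exact since `p ∣ n`. -/
def dpsi (ψ : ℕ → ℤ) (n : ℤ) : ℤ :=
  ∑ p ∈ n.natAbs.primeFactors, (n / (p : ℤ)) * (n.natAbs.factorization p : ℤ) * ψ p

/-- A derivation: a function on primes (zero off primes) with finite norm. -/
def IsDeriv (ψ : ℕ → ℤ) : Prop :=
  (∀ p : ℕ, ¬ p.Prime → ψ p = 0) ∧ ∃ B : ℤ, ∀ p : ℕ, |ψ p| ≤ B

/-- The norm `‖ψ‖ = sup_p |ψ(p)|`. -/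
noncomputable def dNorm (ψ : ℕ → ℤ) : ℝ := ⨆ p : ℕ, (|ψ p| : ℝ)

/-- Membership in `𝒯(a,b)`: a derivation supported on the primes dividing `ab(a+b)`
satisfying `d^ψ(a+b) = d^ψ(a) + d^ψ(b)`. -/
def MemT (a b : ℕ) (ψ : ℕ → ℤ) : Prop :=
  IsDeriv ψ ∧ (∀ p : ℕ, p.Prime → ¬ p ∣ (a * b * (a + b)) → ψ p = 0) ∧
    dpsi ψ ((a : ℤ) + (b : ℤ)) = dpsi ψ (a : ℤ) + dpsi ψ (b : ℤ)

/-- The `ψ`-Wronskian `W^ψ(a,b) = a·d^ψ(b) − b·d^ψ(a)`. -/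
def Wpsi (ψ : ℕ → ℤ) (a b : ℤ) : ℤ := a * dpsi ψ b - b * dpsi ψ a

/-- Membership in `𝒯°(a,b)`: elements of `𝒯(a,b)` for which `a, b` are `ψ`-dependent. -/
def MemT0 (a b : ℕ) (ψ : ℕ → ℤ) : Prop := MemT a b ψ ∧ Wpsi ψ (a : ℤ) (b : ℤ) = 0

/-- The radical of `n`: product of the distinct primes dividing `n`. -/
def radN (n : ℕ) : ℕ := ∏ p ∈ n.primeFactors, p

/-- The Small Derivatives Conjecture with exponent `η`: for all but finitely many triples of
coprime positive integers `(a,b,c)` with `a+b=c`, not of the form `(1,N,q)` with `q` prime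
up to order, there is `ψ ∈ 𝒯(a,b)` with `a,b` `ψ`-independent and `‖ψ‖ < c^η`. -/
def SDC (η : ℝ) : Prop :=
  {t : ℕ × ℕ × ℕ | 0 < t.1 ∧ 0 < t.2.1 ∧ t.1 + t.2.1 = t.2.2 ∧ Nat.Coprime t.1 t.2.1 ∧
    ¬ (∃ N q : ℕ, q.Prime ∧ ({t.1, t.2.1, t.2.2} : Multiset ℕ) = {1, N, q}) ∧
    ¬ ∃ ψ : ℕ → ℤ, MemT t.1 t.2.1 ψ ∧ Wpsi ψ (t.1 : ℤ) (t.2.1 : ℤ) ≠ 0 ∧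
      dNorm ψ < (t.2.2 : ℝ) ^ η}.Finite

/-!
In logarithmic form, `p · d^ψ(n) = n · v_p(n)` for `ψ` the indicator of the prime `p`. Inside the
functions supported on the primes dividing `abc`, a group of rank `ω(abc)`, the group `𝒯(a,b)` is
the kernel of the linear functional `ψ ↦ d^ψ(a + b) - d^ψ(a) - d^ψ(b)`, and `𝒯°(a,b)` is the kernel
of the Wronskian on `𝒯(a,b)`. Over a domain the kernel of a nonzero functional has corank one, so it
remains to see that neither functional vanishes. Dividing `a`, `b`, `c` by `gcd(a,b)` gives a prime
`p` with `v_p(a) = v_p(b) ≠ v_p(c)`: the first functional is nonzero at `p` and the Wronskian is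
zero there. If `a ≠ b`, some prime `q` has `v_q(a) ≠ v_q(b)`, and the Wronskian is nonzero at `q`;
a combination of `p` and `q` then lies in `𝒯(a,b)` but not in `𝒯°(a,b)`.
-/

section Semiring

variable {R M ι : Type*} [Semiring R] [AddCommMonoid M] [Module R M]

lemma exists_linearIndependent_mem_of_le_finrank [Nontrivial R] (N : Submodule R M) {n : ℕ}
    (hn : n ≤ Module.finrank R N) :
    ∃ v : Fin n → M, (∀ i, v i ∈ N) ∧ LinearIndependent R v := by
  obtain ⟨v, hv⟩ := exists_linearIndependent_of_le_finrank hn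
  exact ⟨fun i => v i, fun i => (v i).2, hv.map_injOn N.subtype N.subtype_injective.injOn⟩

lemma not_linearIndependent_of_finrank_lt_card [StrongRankCondition R] [Fintype ι]
    (N : Submodule R M) [Module.Finite R N] (hN : Module.finrank R N < Fintype.card ι) {v : ι → M}
    (hv : ∀ i, v i ∈ N) : ¬ LinearIndependent R v := fun hli =>
  have hli' : LinearIndependent R fun i => (⟨v i, hv i⟩ : N) :=
    LinearIndependent.of_comp N.subtype hli
  hN.not_ge hli'.fintype_card_le_finrank

end Semiring

section CommRing

variable {R M : Type*} [CommRing R] [AddCommGroup M] [Module R M]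

lemma exists_mem_inf_ker_apply_ne_zero [NoZeroDivisors R] {N : Submodule R M} {f g : M →ₗ[R] R}
    {x y : M} (hx : x ∈ N) (hy : y ∈ N) (hfx : f x ≠ 0) (hgx : g x = 0) (hgy : g y ≠ 0) :
    ∃ z ∈ N ⊓ LinearMap.ker f, g z ≠ 0 := by
  refine ⟨f x • y - f y • x, ⟨N.sub_mem (N.smul_mem _ hy) (N.smul_mem _ hx), ?_⟩, ?_⟩
  · simp [mul_comm]
  · simpa [hgx] using And.intro hfx hgy

variable [IsDomain R]

lemma finrank_range_eq_one {f : M →ₗ[R] R} (hf : f ≠ 0) :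
    Module.finrank R (LinearMap.range f) = 1 := by
  have hle : Module.rank R (LinearMap.range f) ≤ 1 :=
    (Submodule.rank_le _).trans_eq (Module.rank_self R)
  have hne : Module.rank R (LinearMap.range f) ≠ 0 :=
    mt Submodule.rank_eq_zero.1 (mt LinearMap.range_eq_bot.1 hf)
  exact Module.rank_eq_one_iff_finrank_eq_one.1
    (hle.antisymm (Cardinal.one_le_iff_ne_zero.2 hne))

lemma finrank_inf_ker_add_one {N : Submodule R M} [Module.Finite R N] {f : M →ₗ[R] R} {x : M}
    (hx : x ∈ N) (hfx : f x ≠ 0) :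
    Module.finrank R ↥(N ⊓ LinearMap.ker f) + 1 = Module.finrank R N := by
  have hg : f.domRestrict N ≠ 0 := fun h => hfx (LinearMap.congr_fun h ⟨x, hx⟩)
  have hker : Module.finrank R (LinearMap.ker (f.domRestrict N)) =
      Module.finrank R ↥(N ⊓ LinearMap.ker f) := by
    rw [LinearMap.ker_domRestrict, ← Submodule.finrank_map_subtype_eq, Submodule.map_comap_subtype]
  rw [← (LinearMap.ker (f.domRestrict N)).finrank_quotient_add_finrank,
    (f.domRestrict N).quotKerEquivRange.finrank_eq, finrank_range_eq_one hg, hker, add_comm]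

end CommRing

section SupportedOn

variable (R : Type*) {ι : Type*} [Semiring R]

/-- The functions `ι → R` vanishing off `S`. The counterpart for plain functions of
`Finsupp.supported`, presented as an intersection of kernels to match
`LinearMap.iInfKerProjEquiv`. -/
def supportedOn (S : Finset ι) : Submodule R (ι → R) :=
  ⨅ i ∈ (S : Set ι)ᶜ, LinearMap.ker (LinearMap.proj i)

variable {R} in
lemma mem_supportedOn {S : Finset ι} {ψ : ι → R} : ψ ∈ supportedOn R S ↔ ∀ i ∉ S, ψ i = 0 := by
  simp [supportedOn]

lemma single_mem_supportedOn [DecidableEq ι] {S : Finset ι} {i : ι} (hi : i ∈ S) (r : R) :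
    Pi.single i r ∈ supportedOn R S :=
  mem_supportedOn.2 fun _ hj => Pi.single_eq_of_ne (ne_of_mem_of_not_mem hi hj).symm _

open scoped Classical in
/-- Restriction to `S` identifies the functions supported on `S` with all functions on `S`. -/
noncomputable def supportedOnEquiv (S : Finset ι) : supportedOn R S ≃ₗ[R] (S → R) :=
  LinearMap.iInfKerProjEquiv R (fun _ => R) (I := (S : Set ι)) disjoint_compl_right
    (Set.union_compl_self _).ge

instance (S : Finset ι) : Module.Finite R (supportedOn R S) :=
  Module.Finite.equiv (supportedOnEquiv R S).symm

lemma finrank_supportedOn [StrongRankCondition R] (S : Finset ι) :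
    Module.finrank R (supportedOn R S) = #S := by
  rw [(supportedOnEquiv R S).finrank_eq, Module.finrank_fintype_fun_eq_card, Fintype.card_coe]

end SupportedOn

lemma exists_abs_le_of_eq_zero_of_notMem {ι G : Type*} [AddGroup G] [Lattice G] {S : Finset ι}
    {ψ : ι → G} (hψ : ∀ i ∉ S, ψ i = 0) : ∃ B, ∀ i, |ψ i| ≤ B := by
  classical
  obtain ⟨B, hB⟩ := (insert |0| (S.image fun i => |ψ i|)).exists_le
  refine ⟨B, fun i => hB _ ?_⟩
  by_cases hi : i ∈ S
  · exact mem_insert_of_mem (mem_image_of_mem _ hi)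
  · simp [hψ i hi]

section Factorization

variable {a b p : ℕ}

lemma mem_primeFactors_mul_mul_add (ha : 0 < a) (hb : 0 < b)
    (hp : a.factorization p ≠ 0 ∨ b.factorization p ≠ 0 ∨ (a + b).factorization p ≠ 0) :
    p ∈ (a * b * (a + b)).primeFactors := by
  have hab : a + b ≠ 0 := by omega
  simp only [← Finsupp.mem_support_iff, Nat.support_factorization] at hp
  rw [Nat.primeFactors_mul (mul_ne_zero ha.ne' hb.ne') hab, Nat.primeFactors_mul ha.ne' hb.ne']
  simpa [or_assoc] using hp

lemma exists_factorization_eq_and_add_ne (ha : 0 < a) (hb : 0 < b) :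
    ∃ p, a.factorization p = b.factorization p ∧
      (a + b).factorization p ≠ a.factorization p := by
  obtain ⟨a', b', hcop, ha', hb'⟩ := Nat.exists_coprime a b
  set g := a.gcd b
  have hg : g ≠ 0 := (Nat.gcd_pos_of_pos_left b ha).ne'
  have ha0 : a' ≠ 0 := by rintro rfl; omega
  have hb0 : b' ≠ 0 := by rintro rfl; omega
  obtain ⟨p, hp, hpc⟩ := Nat.exists_prime_and_dvd (n := a' + b') (by omega)
  have hpa : ¬ p ∣ a' := fun h =>
    Nat.not_coprime_of_dvd_of_dvd hp.one_lt h ((Nat.dvd_add_right h).1 hpc) hcop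
  have hpb : ¬ p ∣ b' := fun h => hpa ((Nat.dvd_add_left h).1 hpc)
  have hvpc := (hp.factorization_pos_of_dvd (by omega) hpc).ne'
  refine ⟨p, ?_⟩
  rw [ha', hb', ← add_mul, Nat.factorization_mul ha0 hg, Nat.factorization_mul hb0 hg,
    Nat.factorization_mul (by omega) hg]
  simpa [Nat.factorization_eq_zero_of_not_dvd hpa, Nat.factorization_eq_zero_of_not_dvd hpb]
    using hvpc

end Factorization

/-- The arithmetic derivative of a fixed integer `n` as a linear functional `ψ ↦ d^ψ(n)`. -/
def dpsiHom (n : ℤ) : (ℕ → ℤ) →ₗ[ℤ] ℤ where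
  toFun ψ := dpsi ψ n
  map_add' ψ φ := by simp only [dpsi, Pi.add_apply, mul_add, sum_add_distrib]
  map_smul' k ψ := by simp only [dpsi, Pi.smul_apply, smul_eq_mul, mul_left_comm, mul_sum,
    RingHom.id_apply]

lemma dpsi_single_one (n : ℤ) (p : ℕ) :
    dpsi (Pi.single p 1) n = n / p * n.natAbs.factorization p := by
  rw [dpsi, sum_eq_single p]
  · rw [Pi.single_eq_same, mul_one]
  · intro q _ hq
    rw [Pi.single_eq_of_ne hq, mul_zero]
  · intro hp
    rw [← Nat.support_factorization, Finsupp.notMem_support_iff] at hp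
    rw [hp, Nat.cast_zero, mul_zero, zero_mul]

lemma mul_dpsi_single_one (n : ℤ) (p : ℕ) :
    p * dpsi (Pi.single p 1) n = n * n.natAbs.factorization p := by
  rw [dpsi_single_one]
  by_cases hpn : (p : ℤ) ∣ n
  · rw [← mul_assoc, Int.mul_ediv_cancel' hpn]
  · simp [Nat.factorization_eq_zero_of_not_dvd (mt Int.natCast_dvd.2 hpn)]

/-- The functional `ψ ↦ d^ψ(a + b) - d^ψ(a) - d^ψ(b)`, measuring the failure of `d^ψ` to be
additive on `a, b`. -/
def additivityDefect (a b : ℤ) : (ℕ → ℤ) →ₗ[ℤ] ℤ := dpsiHom (a + b) - dpsiHom a - dpsiHom b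

/-- The Wronskian of `a, b` as a linear functional `ψ ↦ W^ψ(a,b)`. -/
def wronskianHom (a b : ℤ) : (ℕ → ℤ) →ₗ[ℤ] ℤ := a • dpsiHom b - b • dpsiHom a

lemma additivityDefect_apply (a b : ℤ) (ψ : ℕ → ℤ) :
    additivityDefect a b ψ = dpsi ψ (a + b) - dpsi ψ a - dpsi ψ b := rfl

lemma additivityDefect_eq_zero_iff {a b : ℤ} {ψ : ℕ → ℤ} :
    additivityDefect a b ψ = 0 ↔ dpsi ψ (a + b) = dpsi ψ a + dpsi ψ b := by
  rw [additivityDefect_apply, sub_sub, sub_eq_zero]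

lemma wronskianHom_apply (a b : ℤ) (ψ : ℕ → ℤ) : wronskianHom a b ψ = Wpsi ψ a b := rfl

lemma mul_additivityDefect_single_one (a b : ℤ) (p : ℕ) :
    p * additivityDefect a b (Pi.single p 1) = (a + b) * (a + b).natAbs.factorization p -
      a * a.natAbs.factorization p - b * b.natAbs.factorization p := by
  simp only [additivityDefect_apply, mul_sub, mul_dpsi_single_one]

lemma mul_wronskianHom_single_one (a b : ℤ) (p : ℕ) :
    p * wronskianHom a b (Pi.single p 1) =
      a * b * (b.natAbs.factorization p - a.natAbs.factorization p) := by
  rw [wronskianHom_apply, Wpsi]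
  linear_combination a * mul_dpsi_single_one b p - b * mul_dpsi_single_one a p

/-- The group `𝒯(a,b)`, as a submodule of the functions `ℕ → ℤ`. The finite norm required of a
derivation is automatic, since for `a, b > 0` the support is finite. -/
def TSubmodule (a b : ℕ) : Submodule ℤ (ℕ → ℤ) :=
  supportedOn ℤ (a * b * (a + b)).primeFactors ⊓ LinearMap.ker (additivityDefect a b)

/-- The group `𝒯°(a,b)` of the elements of `𝒯(a,b)` with vanishing Wronskian. -/
def T0Submodule (a b : ℕ) : Submodule ℤ (ℕ → ℤ) := TSubmodule a b ⊓ LinearMap.ker (wronskianHom a b)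

section TSubmodule

variable {a b : ℕ}

lemma mem_TSubmodule (ha : 0 < a) (hb : 0 < b) {ψ : ℕ → ℤ} : ψ ∈ TSubmodule a b ↔ MemT a b ψ := by
  have hn : a * b * (a + b) ≠ 0 := by positivity
  rw [TSubmodule, Submodule.mem_inf, LinearMap.mem_ker, additivityDefect_eq_zero_iff, MemT,
    ← and_assoc]
  refine and_congr_left fun _ => ⟨fun hψ => ?_, fun ⟨⟨hprime, _⟩, hdvd⟩ => ?_⟩
  · have hvanish := mem_supportedOn.1 hψ
    exact ⟨⟨fun p hp => hvanish p (mt Nat.prime_of_mem_primeFactors hp),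
      exists_abs_le_of_eq_zero_of_notMem hvanish⟩,
      fun p _ hp => hvanish p (mt Nat.dvd_of_mem_primeFactors hp)⟩
  · refine mem_supportedOn.2 fun p hp => ?_
    by_cases hpp : p.Prime
    · exact hdvd p hpp fun hd => hp (Nat.mem_primeFactors.2 ⟨hpp, hd, hn⟩)
    · exact hprime p hpp

lemma mem_T0Submodule (ha : 0 < a) (hb : 0 < b) {ψ : ℕ → ℤ} :
    ψ ∈ T0Submodule a b ↔ MemT0 a b ψ := by
  rw [T0Submodule, Submodule.mem_inf, mem_TSubmodule ha hb, LinearMap.mem_ker, wronskianHom_apply,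
    MemT0]

instance : Module.Finite ℤ (TSubmodule a b) :=
  Module.Finite.of_injective _ (Submodule.inclusion_injective inf_le_left)

instance : Module.Finite ℤ (T0Submodule a b) :=
  Module.Finite.of_injective _ (Submodule.inclusion_injective inf_le_left)

lemma exists_additivityDefect_ne_zero_wronskianHom_eq_zero (ha : 0 < a) (hb : 0 < b) :
    ∃ ψ ∈ supportedOn ℤ (a * b * (a + b)).primeFactors,
      additivityDefect a b ψ ≠ 0 ∧ wronskianHom a b ψ = 0 := by
  obtain ⟨p, hpab, hpc⟩ := exists_factorization_eq_and_add_ne ha hb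
  have hmem : p ∈ (a * b * (a + b)).primeFactors := mem_primeFactors_mul_mul_add ha hb (by omega)
  have hp : (p : ℤ) ≠ 0 := mod_cast (Nat.prime_of_mem_primeFactors hmem).ne_zero
  refine ⟨Pi.single p 1, single_mem_supportedOn ℤ hmem 1, right_ne_zero_of_mul (a := (p : ℤ)) ?_,
    (mul_eq_zero.1 ?_).resolve_left hp⟩
  · have hdefect : (p : ℤ) * additivityDefect a b (Pi.single p 1) =
        (a + b : ℕ) * ((a + b).factorization p - a.factorization p : ℤ) := by
      rw [mul_additivityDefect_single_one, ← Nat.cast_add]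
      simp only [Int.natAbs_natCast, ← hpab]
      push_cast
      ring
    rw [hdefect]
    exact mul_ne_zero (by positivity) (sub_ne_zero.2 (mod_cast hpc))
  · simp [mul_wronskianHom_single_one, hpab]

lemma exists_wronskianHom_ne_zero (ha : 0 < a) (hb : 0 < b) (hne : a ≠ b) :
    ∃ ψ ∈ supportedOn ℤ (a * b * (a + b)).primeFactors, wronskianHom a b ψ ≠ 0 := by
  obtain ⟨q, hq⟩ : ∃ q, b.factorization q ≠ a.factorization q := by
    contrapose! hne
    exact Nat.eq_of_factorization_eq ha.ne' hb.ne' fun q => (hne q).symm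
  have hmem : q ∈ (a * b * (a + b)).primeFactors := mem_primeFactors_mul_mul_add ha hb (by omega)
  refine ⟨Pi.single q 1, single_mem_supportedOn ℤ hmem 1, right_ne_zero_of_mul (a := (q : ℤ)) ?_⟩
  rw [mul_wronskianHom_single_one]
  exact mul_ne_zero (by positivity) (sub_ne_zero.2 (mod_cast hq))

lemma exists_mem_TSubmodule_wronskianHom_ne_zero (ha : 0 < a) (hb : 0 < b) (hne : a ≠ b) :
    ∃ ψ ∈ TSubmodule a b, wronskianHom a b ψ ≠ 0 := by
  obtain ⟨ψ, hψ, hdefect, hwronskian⟩ :=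
    exists_additivityDefect_ne_zero_wronskianHom_eq_zero ha hb
  obtain ⟨φ, hφ, hφwronskian⟩ := exists_wronskianHom_ne_zero ha hb hne
  exact exists_mem_inf_ker_apply_ne_zero hψ hφ hdefect hwronskian hφwronskian

lemma finrank_TSubmodule_add_one (ha : 0 < a) (hb : 0 < b) :
    Module.finrank ℤ (TSubmodule a b) + 1 = #(a * b * (a + b)).primeFactors := by
  obtain ⟨ψ, hψ, hdefect, -⟩ := exists_additivityDefect_ne_zero_wronskianHom_eq_zero ha hb
  rw [← finrank_supportedOn ℤ]
  exact finrank_inf_ker_add_one hψ hdefect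

lemma finrank_T0Submodule_add_two (ha : 0 < a) (hb : 0 < b) (hne : a ≠ b) :
    Module.finrank ℤ (T0Submodule a b) + 2 = #(a * b * (a + b)).primeFactors := by
  obtain ⟨ψ, hψ, hwronskian⟩ := exists_mem_TSubmodule_wronskianHom_ne_zero ha hb hne
  rw [← finrank_TSubmodule_add_one ha hb, ← finrank_inf_ker_add_one hψ hwronskian]
  rfl

lemma mem_T0Submodule_of_smul_mem {k : ℤ} {ψ : ℕ → ℤ} (hk : k ≠ 0) (hψ : ψ ∈ TSubmodule a b)
    (hkψ : k • ψ ∈ T0Submodule a b) : ψ ∈ T0Submodule a b := by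
  refine ⟨hψ, ?_⟩
  have hwronskian : k * wronskianHom a b ψ = 0 := by
    simpa only [map_smul, smul_eq_mul] using LinearMap.mem_ker.1 hkψ.2
  exact (mul_eq_zero.1 hwronskian).resolve_left hk

end TSubmodule

theorem T0_saturated_subgroup_general (a b : ℕ) (ha : 0 < a) (hb : 0 < b) (hne : a ≠ b) :
    (MemT0 a b 0 ∧
      (∀ ψ φ : ℕ → ℤ, MemT0 a b ψ → MemT0 a b φ → MemT0 a b (ψ + φ)) ∧
      (∀ ψ : ℕ → ℤ, MemT0 a b ψ → MemT0 a b (-ψ))) ∧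
    (∀ (k : ℤ) (ψ : ℕ → ℤ), k ≠ 0 → MemT a b ψ → MemT0 a b (k • ψ) → MemT0 a b ψ) ∧
    (∃ ψs : Fin ((a * b * (a + b)).primeFactors.card - 2) → (ℕ → ℤ),
      (∀ i, MemT0 a b (ψs i)) ∧ LinearIndependent ℤ ψs) ∧
    (∀ ψs : Fin ((a * b * (a + b)).primeFactors.card - 1) → (ℕ → ℤ),
      (∀ i, MemT0 a b (ψs i)) → ¬ LinearIndependent ℤ ψs) ∧
    (∃ ψ : ℕ → ℤ, MemT a b ψ ∧ ¬ MemT0 a b ψ) := by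
  have hrank := finrank_T0Submodule_add_two ha hb hne
  obtain ⟨ψ, hψ, hwronskian⟩ := exists_mem_TSubmodule_wronskianHom_ne_zero ha hb hne
  simp only [← mem_TSubmodule ha hb, ← mem_T0Submodule ha hb]
  refine ⟨⟨zero_mem _, fun _ _ => add_mem, fun _ => neg_mem⟩,
    fun _ _ => mem_T0Submodule_of_smul_mem,
    exists_linearIndependent_mem_of_le_finrank _ (by omega),
    fun _ => not_linearIndependent_of_finrank_lt_card _ (by rw [Fintype.card_fin]; omega),
    ψ, hψ, fun hψ0 => hwronskian hψ0.2⟩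

/-- `𝒯°(a,b)` is a saturated subgroup of `𝒯(a,b)` of rank `ω(ab(a+b)) − 2`;
in particular it is properly contained in `𝒯(a,b)`. -/
theorem T0_saturated_subgroup (a b : ℕ) (ha : 0 < a) (hb : 0 < b)
    (hab : Nat.Coprime a b) (hne : ¬ (a = 1 ∧ b = 1)) :
    (MemT0 a b 0 ∧
      (∀ ψ φ : ℕ → ℤ, MemT0 a b ψ → MemT0 a b φ → MemT0 a b (ψ + φ)) ∧
      (∀ ψ : ℕ → ℤ, MemT0 a b ψ → MemT0 a b (-ψ))) ∧
    (∀ (k : ℤ) (ψ : ℕ → ℤ), k ≠ 0 → MemT a b ψ → MemT0 a b (k • ψ) → MemT0 a b ψ) ∧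
    (∃ ψs : Fin ((a * b * (a + b)).primeFactors.card - 2) → (ℕ → ℤ),
      (∀ i, MemT0 a b (ψs i)) ∧ LinearIndependent ℤ ψs) ∧
    (∀ ψs : Fin ((a * b * (a + b)).primeFactors.card - 1) → (ℕ → ℤ),
      (∀ i, MemT0 a b (ψs i)) → ¬ LinearIndependent ℤ ψs) ∧
    (∃ ψ : ℕ → ℤ, MemT a b ψ ∧ ¬ MemT0 a b ψ) := by
  refine T0_saturated_subgroup_general a b ha hb fun heq => hne ?_
  subst heq
  exact ⟨(Nat.coprime_self a).1 hab, (Nat.coprime_self a).1 hab⟩
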